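/- Let (π : A → B, ⊞, 0) be as in the context, and for b,b' ∈ B define the maps l(b,b')u := Σ (b₍₁₎b'₍₁₎)\(b₍₂₎·(b'₍₂₎u)), r(b,b')u := Σ ((ub₍₁₎)·b'₍₁₎)/(b₍₂₎b'₍₂₎), t(b)u := Σ b₍₁₎\(ub₍₂₎), s(b,b')u := Σ (b₍₁₎·(ub'₍₁₎))/(b₍₂₎b'₍₂₎), s̄(b,b')u := Σ (b₍₁₎b'₍₁₎)\((b₍₂₎u)·b'₍₂₎), t̄(b)u := Σ (b₍₁₎u)/b₍₂₎ (elements of B acting on A through 0). Then for all x, x' ∈ F(A) and b, b' ∈ B, and for each φ among l, r, s, s̄: φ(b,b')(x·x') = Σ φ(b₍₁₎,b'₍₁₎)x · φ(b₍₂₎,b'₍₂₎)x'; moreover t(b)(x·x') = Σ t(b₍₁₎)x · t(b₍₂₎)x' and t̄(b)(x·x') = Σ t̄(b₍₁₎)x · t̄(b₍₂₎)x'. -/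

import Mathlib

open TensorProduct

namespace FormalLoops

variable (k : Type*) [Field k]

/-- A unital, not necessarily associative, bialgebra with left and right divisions:
a cocommutative coassociative counital coalgebra together with a bilinear unital
multiplication and bilinear left/right divisions which are coalgebra morphisms and
satisfy the division cancellation laws (in Sweedler form). -/
structure DivBialg (A : Type*) [AddCommGroup A] [Module k A] where
  Δ : A →ₗ[k] A ⊗[k] A
  ε : A →ₗ[k] k
  mul : A →ₗ[k] A →ₗ[k] A
  one : A
  ld : A →ₗ[k] A →ₗ[k] A
  rd : A →ₗ[k] A →ₗ[k] A
  coassoc : ∀ u : A, (TensorProduct.assoc k A A A) ((Δ.rTensor A) (Δ u)) = (Δ.lTensor A) (Δ u)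
  counit_left : ∀ u : A, (TensorProduct.lid k A) ((ε.rTensor A) (Δ u)) = u
  counit_right : ∀ u : A, (TensorProduct.rid k A) ((ε.lTensor A) (Δ u)) = u
  cocomm : ∀ u : A, (TensorProduct.comm k A A) (Δ u) = Δ u
  Δ_one : Δ one = one ⊗ₜ[k] one
  ε_one : ε one = 1
  one_mul : ∀ u, mul one u = u
  mul_one : ∀ u, mul u one = u
  Δ_mul : ∀ u v, Δ (mul u v) = TensorProduct.map₂ mul mul (Δ u) (Δ v)
  ε_mul : ∀ u v, ε (mul u v) = ε u * ε v
  Δ_ld : ∀ u v, Δ (ld u v) = TensorProduct.map₂ ld ld (Δ u) (Δ v)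
  ε_ld : ∀ u v, ε (ld u v) = ε u * ε v
  Δ_rd : ∀ u v, Δ (rd u v) = TensorProduct.map₂ rd rd (Δ u) (Δ v)
  ε_rd : ∀ u v, ε (rd u v) = ε u * ε v
  /-- Σ u₍₁₎\(u₍₂₎v) = ε(u)v -/
  ld_mul_cancel : ∀ u v, TensorProduct.lift ld ((LinearMap.lTensor A (mul.flip v)) (Δ u)) = ε u • v
  /-- Σ u₍₁₎(u₍₂₎\v) = ε(u)v -/
  mul_ld_cancel : ∀ u v, TensorProduct.lift mul ((LinearMap.lTensor A (ld.flip v)) (Δ u)) = ε u • v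
  /-- Σ (vu₍₁₎)/u₍₂₎ = ε(u)v -/
  rd_mul_cancel : ∀ u v, TensorProduct.lift rd ((LinearMap.rTensor A (mul v)) (Δ u)) = ε u • v
  /-- Σ (v/u₍₁₎)u₍₂₎ = ε(u)v -/
  mul_rd_cancel : ∀ u v, TensorProduct.lift mul ((LinearMap.rTensor A (rd v)) (Δ u)) = ε u • v

variable {A B : Type*} [AddCommGroup A] [Module k A] [AddCommGroup B] [Module k B]

/-- A morphism of unital bialgebras with divisions. -/
structure DivBialgHom (SA : DivBialg k A) (SB : DivBialg k B) (π : A →ₗ[k] B) : Prop where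
  map_Δ : ∀ u, TensorProduct.map π π (SA.Δ u) = SB.Δ (π u)
  map_ε : ∀ u, SB.ε (π u) = SA.ε u
  map_mul : ∀ u v, π (SA.mul u v) = SB.mul (π u) (π v)
  map_one : π SA.one = SB.one
  map_ld : ∀ u v, π (SA.ld u v) = SB.ld (π u) (π v)
  map_rd : ∀ u v, π (SA.rd u v) = SB.rd (π u) (π v)

/-- `D` is a subcoalgebra w.r.t. the comultiplication `Δ`: `Δ(D) ⊆ D ⊗ D`. -/
def IsSubcoalg {M : Type*} [AddCommGroup M] [Module k M] (Δ : M →ₗ[k] M ⊗[k] M)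
    (D : Submodule k M) : Prop :=
  ∀ x ∈ D, Δ x ∈ LinearMap.range (TensorProduct.map D.subtype D.subtype)

/-- `F(A)`: the sum of all subcoalgebras `D ⊆ A` on which `π = ε(·) • 1`. -/
def Fsub (SA : DivBialg k A) (oneB : B) (π : A →ₗ[k] B) : Submodule k A :=
  sSup {D : Submodule k A | IsSubcoalg k SA.Δ D ∧ ∀ x ∈ D, π x = SA.ε x • oneB}

end FormalLoops

namespace FormalLoops

variable (k : Type*) [Field k]
variable {A B : Type*} [AddCommGroup A] [Module k A] [AddCommGroup B] [Module k B]

/-- Core of the Sweedler-type operators `u ↦ Σ d(α(b₍₁₎,b'₍₁₎), β(b₍₂₎,b'₍₂₎,u))`. -/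
noncomputable def sweedCoreL (d : A →ₗ[k] A →ₗ[k] A) (α : B →ₗ[k] B →ₗ[k] A)
    (β : B →ₗ[k] B →ₗ[k] A →ₗ[k] A) :
    ((B ⊗[k] B) ⊗[k] (B ⊗[k] B)) ⊗[k] A →ₗ[k] A :=
  TensorProduct.lift d ∘ₗ
  TensorProduct.map (TensorProduct.lift α) (TensorProduct.lift (TensorProduct.lift β)) ∘ₗ
  (TensorProduct.assoc k (B ⊗[k] B) (B ⊗[k] B) A).toLinearMap ∘ₗ
  LinearMap.rTensor A (TensorProduct.tensorTensorTensorComm k B B B B).toLinearMap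

/-- Core of the Sweedler-type operators `u ↦ Σ d(β(b₍₁₎,b'₍₁₎,u), α(b₍₂₎,b'₍₂₎))`. -/
noncomputable def sweedCoreR (d : A →ₗ[k] A →ₗ[k] A) (α : B →ₗ[k] B →ₗ[k] A)
    (β : B →ₗ[k] B →ₗ[k] A →ₗ[k] A) :
    ((B ⊗[k] B) ⊗[k] (B ⊗[k] B)) ⊗[k] A →ₗ[k] A :=
  TensorProduct.lift d.flip ∘ₗ
  TensorProduct.map (TensorProduct.lift α) (TensorProduct.lift (TensorProduct.lift β)) ∘ₗ
  (TensorProduct.assoc k (B ⊗[k] B) (B ⊗[k] B) A).toLinearMap ∘ₗ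
  LinearMap.rTensor A ((TensorProduct.comm k (B ⊗[k] B) (B ⊗[k] B)).toLinearMap ∘ₗ
    (TensorProduct.tensorTensorTensorComm k B B B B).toLinearMap)

/-- Core of the one-variable Sweedler-type operators `u ↦ Σ d(γ(b₍₁₎), δ(b₍₂₎,u))`. -/
noncomputable def sweedCore1L (d : A →ₗ[k] A →ₗ[k] A) (γ : B →ₗ[k] A)
    (δ : B →ₗ[k] A →ₗ[k] A) : (B ⊗[k] B) ⊗[k] A →ₗ[k] A :=
  TensorProduct.lift d ∘ₗ TensorProduct.map γ (TensorProduct.lift δ) ∘ₗ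
  (TensorProduct.assoc k B B A).toLinearMap

/-- Core of the one-variable Sweedler-type operators `u ↦ Σ d(δ(b₍₁₎,u), γ(b₍₂₎))`. -/
noncomputable def sweedCore1R (d : A →ₗ[k] A →ₗ[k] A) (γ : B →ₗ[k] A)
    (δ : B →ₗ[k] A →ₗ[k] A) : (B ⊗[k] B) ⊗[k] A →ₗ[k] A :=
  TensorProduct.lift d.flip ∘ₗ TensorProduct.map γ (TensorProduct.lift δ) ∘ₗ
  (TensorProduct.assoc k B B A).toLinearMap ∘ₗ
  LinearMap.rTensor A (TensorProduct.comm k B B).toLinearMap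

/-- `l(b,b') : u ↦ Σ (b₍₁₎b'₍₁₎)\(b₍₂₎·(b'₍₂₎u))`, where `B` acts through `z`. -/
noncomputable def opL (S : DivBialg k A) (ΔB : B →ₗ[k] B ⊗[k] B) (z : B →ₗ[k] A)
    (b b' : B) : A →ₗ[k] A :=
  sweedCoreL k S.ld (S.mul.compl₁₂ z z)
      ((LinearMap.llcomp k A A A).compl₁₂ (S.mul ∘ₗ z) (S.mul ∘ₗ z)) ∘ₗ
    TensorProduct.mk k ((B ⊗[k] B) ⊗[k] (B ⊗[k] B)) A (ΔB b ⊗ₜ[k] ΔB b')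

/-- `r(b,b') : u ↦ Σ ((ub₍₁₎)·b'₍₁₎)/(b₍₂₎b'₍₂₎)`. -/
noncomputable def opR (S : DivBialg k A) (ΔB : B →ₗ[k] B ⊗[k] B) (z : B →ₗ[k] A)
    (b b' : B) : A →ₗ[k] A :=
  sweedCoreR k S.rd (S.mul.compl₁₂ z z)
      (((LinearMap.llcomp k A A A).compl₁₂ (S.mul.flip ∘ₗ z) (S.mul.flip ∘ₗ z)).flip) ∘ₗ
    TensorProduct.mk k ((B ⊗[k] B) ⊗[k] (B ⊗[k] B)) A (ΔB b ⊗ₜ[k] ΔB b')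

/-- `s(b,b') : u ↦ Σ (b₍₁₎·(ub'₍₁₎))/(b₍₂₎b'₍₂₎)`. -/
noncomputable def opS (S : DivBialg k A) (ΔB : B →ₗ[k] B ⊗[k] B) (z : B →ₗ[k] A)
    (b b' : B) : A →ₗ[k] A :=
  sweedCoreR k S.rd (S.mul.compl₁₂ z z)
      ((LinearMap.llcomp k A A A).compl₁₂ (S.mul ∘ₗ z) (S.mul.flip ∘ₗ z)) ∘ₗ
    TensorProduct.mk k ((B ⊗[k] B) ⊗[k] (B ⊗[k] B)) A (ΔB b ⊗ₜ[k] ΔB b')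

/-- `s̄(b,b') : u ↦ Σ (b₍₁₎b'₍₁₎)\((b₍₂₎u)·b'₍₂₎)`. -/
noncomputable def opSbar (S : DivBialg k A) (ΔB : B →ₗ[k] B ⊗[k] B) (z : B →ₗ[k] A)
    (b b' : B) : A →ₗ[k] A :=
  sweedCoreL k S.ld (S.mul.compl₁₂ z z)
      (((LinearMap.llcomp k A A A).compl₁₂ (S.mul.flip ∘ₗ z) (S.mul ∘ₗ z)).flip) ∘ₗ
    TensorProduct.mk k ((B ⊗[k] B) ⊗[k] (B ⊗[k] B)) A (ΔB b ⊗ₜ[k] ΔB b')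

/-- `t(b) : u ↦ Σ b₍₁₎\(ub₍₂₎)`. -/
noncomputable def opT (S : DivBialg k A) (ΔB : B →ₗ[k] B ⊗[k] B) (z : B →ₗ[k] A)
    (b : B) : A →ₗ[k] A :=
  sweedCore1L k S.ld z (S.mul.flip ∘ₗ z) ∘ₗ TensorProduct.mk k (B ⊗[k] B) A (ΔB b)

/-- `t̄(b) : u ↦ Σ (b₍₁₎u)/b₍₂₎`. -/
noncomputable def opTbar (S : DivBialg k A) (ΔB : B →ₗ[k] B ⊗[k] B) (z : B →ₗ[k] A)
    (b : B) : A →ₗ[k] A :=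
  sweedCore1R k S.rd z (S.mul ∘ₗ z) ∘ₗ TensorProduct.mk k (B ⊗[k] B) A (ΔB b)

/-- `x` is a primitive element of the bialgebra. -/
def IsPrimitive (S : DivBialg k A) (x : A) : Prop :=
  S.Δ x = x ⊗ₜ[k] S.one + S.one ⊗ₜ[k] x

end FormalLoops

namespace FormalLoops

variable (k : Type*) [Field k]
variable {A B : Type*} [AddCommGroup A] [Module k A] [AddCommGroup B] [Module k B]

/-- The comultiplication of the tensor-product coalgebra `A ⊗ A`. -/
noncomputable def tcomul (SA : DivBialg k A) :
    A ⊗[k] A →ₗ[k] (A ⊗[k] A) ⊗[k] (A ⊗[k] A) :=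
  (TensorProduct.tensorTensorTensorComm k A A A A).toLinearMap ∘ₗ
    TensorProduct.map SA.Δ SA.Δ

/-- The counit of the tensor-product coalgebra `A ⊗ A`. -/
noncomputable def tcounit (SA : DivBialg k A) : A ⊗[k] A →ₗ[k] k :=
  (TensorProduct.lid k k).toLinearMap ∘ₗ TensorProduct.map SA.ε SA.ε

/-- The linear map `A ⊗ A → B`, `u ⊗ v ↦ ε(v) π(u)`. -/
noncomputable def pbFst (SA : DivBialg k A) (π : A →ₗ[k] B) : A ⊗[k] A →ₗ[k] B :=
  (TensorProduct.rid k B).toLinearMap ∘ₗ TensorProduct.map π SA.ε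

/-- The linear map `A ⊗ A → B`, `u ⊗ v ↦ ε(u) π(v)`. -/
noncomputable def pbSnd (SA : DivBialg k A) (π : A →ₗ[k] B) : A ⊗[k] A →ₗ[k] B :=
  (TensorProduct.lid k B).toLinearMap ∘ₗ TensorProduct.map SA.ε π

/-- The pullback `A ⊗_B A`: the sum of all subcoalgebras of the tensor-product
coalgebra `A ⊗ A` on which `u ⊗ v ↦ ε(v)π(u)` and `u ⊗ v ↦ ε(u)π(v)` agree. -/
noncomputable def pbSub (SA : DivBialg k A) (π : A →ₗ[k] B) : Submodule k (A ⊗[k] A) :=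
  sSup {C : Submodule k (A ⊗[k] A) | IsSubcoalg k (tcomul k SA) C ∧
    ∀ t ∈ C, pbFst k SA π t = pbSnd k SA π t}

/-- The data of an abelian group `(π : A → B, ⊞, 0)` in the comma category over `B`:
a linear map `⊞ = bp : A ⊗_B A → A` which lies over `B`, is a coalgebra morphism
(witnessed by a corestriction `Δpb` of the comultiplication of `A ⊗ A` to `A ⊗_B A`),
is multiplicative, commutative, associative on `F(A)` and has `0 = z ∘ π` as unit. -/
structure BoxPlusData (SA : DivBialg k A) (SB : DivBialg k B)
    (π : A →ₗ[k] B) (z : B →ₗ[k] A) where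
  bp : ↥(pbSub k SA π) →ₗ[k] A
  Δpb : ↥(pbSub k SA π) →ₗ[k] (↥(pbSub k SA π) ⊗[k] ↥(pbSub k SA π))
  Δpb_compat : ∀ t : pbSub k SA π,
    TensorProduct.map (pbSub k SA π).subtype (pbSub k SA π).subtype (Δpb t)
      = tcomul k SA (t : A ⊗[k] A)
  π_bp : ∀ t : pbSub k SA π, π (bp t) = pbFst k SA π (t : A ⊗[k] A)
  Δ_bp : ∀ t : pbSub k SA π, SA.Δ (bp t) = TensorProduct.map bp bp (Δpb t)
  ε_bp : ∀ t : pbSub k SA π, SA.ε (bp t) = tcounit k SA (t : A ⊗[k] A)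
  bp_mul : ∀ (t t' : pbSub k SA π)
      (h : TensorProduct.map₂ SA.mul SA.mul (t : A ⊗[k] A) (t' : A ⊗[k] A) ∈ pbSub k SA π),
      bp ⟨TensorProduct.map₂ SA.mul SA.mul (t : A ⊗[k] A) (t' : A ⊗[k] A), h⟩
        = SA.mul (bp t) (bp t')
  bp_flip : ∀ (t : pbSub k SA π)
      (h : (TensorProduct.comm k A A) (t : A ⊗[k] A) ∈ pbSub k SA π),
      bp ⟨(TensorProduct.comm k A A) (t : A ⊗[k] A), h⟩ = bp t
  bp_assoc : ∀ x ∈ Fsub k SA SB.one π, ∀ y ∈ Fsub k SA SB.one π, ∀ w ∈ Fsub k SA SB.one π,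
      ∀ (h1 : x ⊗ₜ[k] y ∈ pbSub k SA π) (h2 : y ⊗ₜ[k] w ∈ pbSub k SA π)
        (h3 : (bp ⟨x ⊗ₜ[k] y, h1⟩) ⊗ₜ[k] w ∈ pbSub k SA π)
        (h4 : x ⊗ₜ[k] (bp ⟨y ⊗ₜ[k] w, h2⟩) ∈ pbSub k SA π),
      bp ⟨(bp ⟨x ⊗ₜ[k] y, h1⟩) ⊗ₜ[k] w, h3⟩ = bp ⟨x ⊗ₜ[k] (bp ⟨y ⊗ₜ[k] w, h2⟩), h4⟩
  bp_unit_right : ∀ (u : A)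
      (h : (LinearMap.lTensor A (z ∘ₗ π)) (SA.Δ u) ∈ pbSub k SA π),
      bp ⟨(LinearMap.lTensor A (z ∘ₗ π)) (SA.Δ u), h⟩ = u
  bp_unit_left : ∀ (u : A)
      (h : (LinearMap.rTensor A (z ∘ₗ π)) (SA.Δ u) ∈ pbSub k SA π),
      bp ⟨(LinearMap.rTensor A (z ∘ₗ π)) (SA.Δ u), h⟩ = u

end FormalLoops

namespace FormalLoops

variable (k : Type*) [Field k]
variable {A B : Type*} [AddCommGroup A] [Module k A] [AddCommGroup B] [Module k B]

/-- For a fixed `x : A`, the linear map `b ⊗ b' ↦ (op(b,b'))(x)` associated with a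
Sweedler-type operator core. -/
noncomputable def hatOf (core : ((B ⊗[k] B) ⊗[k] (B ⊗[k] B)) ⊗[k] A →ₗ[k] A)
    (ΔB : B →ₗ[k] B ⊗[k] B) (x : A) : B ⊗[k] B →ₗ[k] A :=
  core ∘ₗ (TensorProduct.mk k ((B ⊗[k] B) ⊗[k] (B ⊗[k] B)) A).flip x ∘ₗ
    TensorProduct.map ΔB ΔB

/-- For a fixed `x : A`, the linear map `b ↦ (op(b))(x)` associated with a one-variable
Sweedler-type operator core. -/
noncomputable def hat1Of (core : (B ⊗[k] B) ⊗[k] A →ₗ[k] A)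
    (ΔB : B →ₗ[k] B ⊗[k] B) (x : A) : B →ₗ[k] A :=
  core ∘ₗ (TensorProduct.mk k (B ⊗[k] B) A).flip x ∘ₗ ΔB

/-- `b ⊗ b' ↦ r(b,b')(x)`. -/
noncomputable def rHat (S : DivBialg k A) (ΔB : B →ₗ[k] B ⊗[k] B) (z : B →ₗ[k] A)
    (x : A) : B ⊗[k] B →ₗ[k] A :=
  hatOf k (sweedCoreR k S.rd (S.mul.compl₁₂ z z)
      (((LinearMap.llcomp k A A A).compl₁₂ (S.mul.flip ∘ₗ z) (S.mul.flip ∘ₗ z)).flip)) ΔB x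

/-- `b ⊗ b' ↦ s(b,b')(x)`. -/
noncomputable def sHat (S : DivBialg k A) (ΔB : B →ₗ[k] B ⊗[k] B) (z : B →ₗ[k] A)
    (x : A) : B ⊗[k] B →ₗ[k] A :=
  hatOf k (sweedCoreR k S.rd (S.mul.compl₁₂ z z)
      ((LinearMap.llcomp k A A A).compl₁₂ (S.mul ∘ₗ z) (S.mul.flip ∘ₗ z))) ΔB x

/-- `b ⊗ b' ↦ l(b,b')(x)`. -/
noncomputable def lHat (S : DivBialg k A) (ΔB : B →ₗ[k] B ⊗[k] B) (z : B →ₗ[k] A)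
    (x : A) : B ⊗[k] B →ₗ[k] A :=
  hatOf k (sweedCoreL k S.ld (S.mul.compl₁₂ z z)
      ((LinearMap.llcomp k A A A).compl₁₂ (S.mul ∘ₗ z) (S.mul ∘ₗ z))) ΔB x

/-- `b ⊗ b' ↦ s̄(b,b')(x)`. -/
noncomputable def sbarHat (S : DivBialg k A) (ΔB : B →ₗ[k] B ⊗[k] B) (z : B →ₗ[k] A)
    (x : A) : B ⊗[k] B →ₗ[k] A :=
  hatOf k (sweedCoreL k S.ld (S.mul.compl₁₂ z z)
      (((LinearMap.llcomp k A A A).compl₁₂ (S.mul.flip ∘ₗ z) (S.mul ∘ₗ z)).flip)) ΔB x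

/-- `b ↦ t(b)(x)`. -/
noncomputable def tHat (S : DivBialg k A) (ΔB : B →ₗ[k] B ⊗[k] B) (z : B →ₗ[k] A)
    (x : A) : B →ₗ[k] A :=
  hat1Of k (sweedCore1L k S.ld z (S.mul.flip ∘ₗ z)) ΔB x

/-- `b ↦ t̄(b)(x)`. -/
noncomputable def tbarHat (S : DivBialg k A) (ΔB : B →ₗ[k] B ⊗[k] B) (z : B →ₗ[k] A)
    (x : A) : B →ₗ[k] A :=
  hat1Of k (sweedCore1R k S.rd z (S.mul ∘ₗ z)) ΔB x

/-- The iterated comultiplication `b ↦ Σ b₍₁₎ ⊗ (b₍₂₎ ⊗ b₍₃₎)`. -/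
noncomputable def comul2 (ΔB : B →ₗ[k] B ⊗[k] B) : B →ₗ[k] B ⊗[k] (B ⊗[k] B) :=
  LinearMap.lTensor B ΔB ∘ₗ ΔB

end FormalLoops

/-!
Everything is an identity between linear maps out of the cocommutative coalgebra `C = B ⊗ B` or
`C = B`, on which multiplication, divisions and `⊞` act by convolution. Being multiplicative, `⊞`
satisfies the interchange law `(f · f') ⊞ (h · h') = (f ⊞ h) · (f' ⊞ h')`.

* Over the constant map `1`, the Eckmann–Hilton argument gives `f ⊞ f' = f · f'`. In particular
  the constant maps at `x, x' ∈ F(A)` satisfy `x ⊞ x' = x x'`.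
* If `α` is a section composed with a coalgebra morphism, then `α ⊞ α = α`. For `β, β'` over the
  same map as `α`, the quotients `δ = α \ β` and `δ' = α \ β'` lie over `1`, whence
  `α · (δ · δ') = (α ⊞ α) · (δ ⊞ δ') = (α · δ) ⊞ (α · δ') = β ⊞ β'`, that is
  `α \ (β ⊞ β') = (α \ β) · (α \ β')`.
* Each operator sends `x` to a quotient `α \ β_x` or `β_x / α`, where `β_x` is a product of such
  maps `α` and the constant map at `x`; by interchange `β_{xx'} = β_x ⊞ β_{x'}`.
-/

namespace FormalLoops

open Coalgebra

section Convolution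

variable {R C M N P M' N' P' : Type*} [CommSemiring R] [AddCommMonoid C] [Module R C]
  [AddCommMonoid M] [Module R M] [AddCommMonoid N] [Module R N] [AddCommMonoid P] [Module R P]
  [AddCommMonoid M'] [Module R M'] [AddCommMonoid N'] [Module R N']
  [AddCommMonoid P'] [Module R P'] [Coalgebra R C]

/-- The map `c ↦ Σ f(c₍₁₎) ⊗ g(c₍₂₎)` induced by `f` and `g` on a coalgebra. -/
noncomputable def pair (f : C →ₗ[R] M) (g : C →ₗ[R] N) : C →ₗ[R] M ⊗[R] N :=
  TensorProduct.map f g ∘ₗ comul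

/-- The convolution `c ↦ Σ m(f(c₍₁₎), g(c₍₂₎))` of `f` and `g` along a bilinear operation `m`,
which here is a multiplication or a division. -/
noncomputable def convolve (m : M →ₗ[R] N →ₗ[R] P) (f : C →ₗ[R] M) (g : C →ₗ[R] N) :
    C →ₗ[R] P :=
  TensorProduct.lift m ∘ₗ pair f g

/-- The constant map `c ↦ ε(c) x` from a coalgebra. -/
noncomputable def constMap (C : Type*) [AddCommMonoid C] [Module R C] [Coalgebra R C] (x : M) :
    C →ₗ[R] M :=
  (counit (R := R) (A := C)).smulRight x

theorem map_comp_pair (φ : M →ₗ[R] M') (ψ : N →ₗ[R] N') (f : C →ₗ[R] M) (g : C →ₗ[R] N) :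
    TensorProduct.map φ ψ ∘ₗ pair f g = pair (φ ∘ₗ f) (ψ ∘ₗ g) := by
  rw [pair, pair, TensorProduct.map_comp, LinearMap.comp_assoc]

theorem pair_comp_coalgHom {D : Type*} [AddCommMonoid D] [Module R D] [Coalgebra R D]
    (f : C →ₗ[R] M) (g : C →ₗ[R] N) (q : D →ₗc[R] C) :
    pair f g ∘ₗ q.toLinearMap = pair (f ∘ₗ q.toLinearMap) (g ∘ₗ q.toLinearMap) := by
  rw [pair, LinearMap.comp_assoc, ← q.map_comp_comul, ← LinearMap.comp_assoc,
    ← TensorProduct.map_comp]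
  rfl

theorem assoc_comp_pair_pair (f : C →ₗ[R] M) (g : C →ₗ[R] N) (h : C →ₗ[R] P) :
    (TensorProduct.assoc R M N P).toLinearMap ∘ₗ pair (pair f g) h = pair f (pair g h) := by
  calc
    _ = (TensorProduct.assoc R M N P).toLinearMap ∘ₗ TensorProduct.map (TensorProduct.map f g) h ∘ₗ
          comul.rTensor C ∘ₗ comul := by
      rw [← LinearMap.comp_assoc comul, LinearMap.map_comp_rTensor]
      rfl
    _ = TensorProduct.map f (TensorProduct.map g h) ∘ₗ comul.lTensor C ∘ₗ comul := by
      rw [← LinearMap.comp_assoc, ← TensorProduct.map_map_comp_assoc_eq, LinearMap.comp_assoc,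
        Coalgebra.coassoc]
    _ = _ := by
      rw [← LinearMap.comp_assoc, LinearMap.map_comp_lTensor]
      rfl

theorem pair_constMap_left (x : M) (g : C →ₗ[R] N) :
    pair (constMap C x) g = TensorProduct.mk R M N x ∘ₗ g := by
  have h : TensorProduct.map (constMap C x) g =
      TensorProduct.map (LinearMap.toSpanSingleton R M x) g ∘ₗ counit.rTensor C := by
    ext; simp [constMap]
  rw [pair, h, LinearMap.comp_assoc, Coalgebra.rTensor_counit_comp_comul]
  ext; simp

theorem pair_constMap_right (f : C →ₗ[R] M) (y : N) :
    pair f (constMap C y) = (TensorProduct.mk R M N).flip y ∘ₗ f := by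
  have h : TensorProduct.map f (constMap C y) =
      TensorProduct.map f (LinearMap.toSpanSingleton R N y) ∘ₗ counit.lTensor C := by
    ext; simp [constMap]
  rw [pair, h, LinearMap.comp_assoc, Coalgebra.lTensor_counit_comp_comul]
  ext; simp

theorem convolve_constMap_left (m : M →ₗ[R] N →ₗ[R] P) (x : M) (g : C →ₗ[R] N) :
    convolve m (constMap C x) g = m x ∘ₗ g := by
  rw [convolve, pair_constMap_left]
  ext; simp

theorem convolve_constMap_right (m : M →ₗ[R] N →ₗ[R] P) (f : C →ₗ[R] M) (y : N) :
    convolve m f (constMap C y) = m.flip y ∘ₗ f := by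
  rw [convolve, pair_constMap_right]
  ext; simp

theorem counit_eq_constMap : (counit : C →ₗ[R] R) = constMap C 1 := by
  ext; simp [constMap]

theorem lid_comp_pair_counit (g : C →ₗ[R] N) :
    (TensorProduct.lid R N).toLinearMap ∘ₗ pair counit g = g := by
  rw [counit_eq_constMap, pair_constMap_left]
  ext; simp

theorem rid_comp_pair_counit (f : C →ₗ[R] M) :
    (TensorProduct.rid R M).toLinearMap ∘ₗ pair f counit = f := by
  rw [counit_eq_constMap, pair_constMap_right]
  ext; simp

theorem comp_convolve {m : M →ₗ[R] N →ₗ[R] P} {m' : M' →ₗ[R] N' →ₗ[R] P'} {φ : P →ₗ[R] P'}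
    {φ₁ : M →ₗ[R] M'} {φ₂ : N →ₗ[R] N'} (h : ∀ u v, φ (m u v) = m' (φ₁ u) (φ₂ v))
    (f : C →ₗ[R] M) (g : C →ₗ[R] N) :
    φ ∘ₗ convolve m f g = convolve m' (φ₁ ∘ₗ f) (φ₂ ∘ₗ g) := by
  rw [convolve, convolve, ← map_comp_pair, ← LinearMap.comp_assoc, ← LinearMap.comp_assoc]
  congr 1
  ext; simp [h]

section Cocommutative

variable [IsCocomm R C]

theorem comm_comp_pair (f : C →ₗ[R] M) (g : C →ₗ[R] N) :
    (TensorProduct.comm R M N).toLinearMap ∘ₗ pair f g = pair g f := by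
  rw [pair, ← LinearMap.comp_assoc, ← TensorProduct.map_comp_comm_eq, LinearMap.comp_assoc,
    IsCocomm.comm_comp_comul, pair]

theorem convolve_flip (m : M →ₗ[R] N →ₗ[R] P) (f : C →ₗ[R] M) (g : C →ₗ[R] N) :
    convolve m.flip g f = convolve m f g := by
  rw [convolve, convolve, ← comm_comp_pair, ← LinearMap.comp_assoc]
  congr 1
  ext; simp

theorem leftComm_comp_pair_pair (f : C →ₗ[R] M) (g : C →ₗ[R] N) (h : C →ₗ[R] P) :
    (TensorProduct.leftComm R M N P).toLinearMap ∘ₗ pair f (pair g h) = pair g (pair f h) := by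
  rw [← assoc_comp_pair_pair, ← assoc_comp_pair_pair g f h, ← comm_comp_pair f g,
    ← LinearMap.id_comp h, ← map_comp_pair, LinearMap.id_comp]
  simp only [← LinearMap.comp_assoc]
  congr 1
  ext; simp

theorem tensorTensorTensorComm_comp_pair_pair (f : C →ₗ[R] M) (g : C →ₗ[R] N)
    (f' : C →ₗ[R] M') (g' : C →ₗ[R] N') :
    (TensorProduct.tensorTensorTensorComm R M N M' N').toLinearMap ∘ₗ
      pair (pair f g) (pair f' g') = pair (pair f f') (pair g g') := by
  have interchange : (TensorProduct.tensorTensorTensorComm R C C C C).toLinearMap ∘ₗ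
      TensorProduct.map comul comul ∘ₗ comul = TensorProduct.map comul comul ∘ₗ comul :=
    (comulCoalgHom R C).map_comp_comul.symm
  calc
    _ = (TensorProduct.tensorTensorTensorComm R M N M' N').toLinearMap ∘ₗ
          TensorProduct.map (TensorProduct.map f g) (TensorProduct.map f' g') ∘ₗ
            TensorProduct.map comul comul ∘ₗ comul := by
      rw [← LinearMap.comp_assoc comul, ← TensorProduct.map_comp]
      rfl
    _ = TensorProduct.map (TensorProduct.map f f') (TensorProduct.map g g') ∘ₗ
          TensorProduct.map comul comul ∘ₗ comul := by
      rw [← LinearMap.comp_assoc, TensorProduct.tensorTensorTensorComm_comp_map,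
        LinearMap.comp_assoc, interchange]
    _ = _ := by
      rw [← LinearMap.comp_assoc, ← TensorProduct.map_comp]
      rfl

theorem convolve_map₂_pair (m : M →ₗ[R] N →ₗ[R] P) (m' : M' →ₗ[R] N' →ₗ[R] P')
    (f : C →ₗ[R] M) (f' : C →ₗ[R] M') (g : C →ₗ[R] N) (g' : C →ₗ[R] N') :
    convolve (TensorProduct.map₂ m m') (pair f f') (pair g g') =
      pair (convolve m f g) (convolve m' f' g') := by
  have factor : TensorProduct.lift (TensorProduct.map₂ m m') =
      TensorProduct.map (TensorProduct.lift m) (TensorProduct.lift m') ∘ₗ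
        (TensorProduct.tensorTensorTensorComm R M M' N N').toLinearMap := by
    ext; simp
  rw [convolve, factor, LinearMap.comp_assoc, tensorTensorTensorComm_comp_pair_pair,
    map_comp_pair]
  rfl

end Cocommutative

end Convolution

section Projections

variable (R B : Type*) [CommSemiring R] [AddCommMonoid B] [Module R B] [Coalgebra R B]

/-- The projection `b ⊗ b' ↦ ε(b') b`. -/
noncomputable def tensorFst : B ⊗[R] B →ₗc[R] B :=
  (Coalgebra.TensorProduct.rid R R B : B ⊗[R] R →ₗc[R] B).comp
    (Coalgebra.TensorProduct.map (CoalgHom.id R B) (counitCoalgHom R B))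

/-- The projection `b ⊗ b' ↦ ε(b) b'`. -/
noncomputable def tensorSnd : B ⊗[R] B →ₗc[R] B :=
  (Coalgebra.TensorProduct.lid R B : R ⊗[R] B →ₗc[R] B).comp
    (Coalgebra.TensorProduct.map (counitCoalgHom R B) (CoalgHom.id R B))

theorem pair_tensorFst_tensorSnd :
    pair (tensorFst R B).toLinearMap (tensorSnd R B).toLinearMap = LinearMap.id := by
  have h : TensorProduct.map (tensorFst R B).toLinearMap (tensorSnd R B).toLinearMap ∘ₗ
      (TensorProduct.tensorTensorTensorComm R B B B B).toLinearMap =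
      TensorProduct.map ((TensorProduct.rid R B).toLinearMap ∘ₗ counit.lTensor B)
        ((TensorProduct.lid R B).toLinearMap ∘ₗ counit.rTensor B) := by
    ext; simp [tensorFst, tensorSnd, TensorProduct.smul_tmul, smul_smul, mul_comm]
  refine TensorProduct.ext' fun b b' => ?_
  calc
    _ = TensorProduct.map (tensorFst R B).toLinearMap (tensorSnd R B).toLinearMap
          (TensorProduct.tensorTensorTensorComm R B B B B (comul b ⊗ₜ comul b')) := rfl
    _ = _ := by simpa using LinearMap.congr_fun h (comul b ⊗ₜ comul b')

variable {R B} {A : Type*} [AddCommMonoid A] [Module R A]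

theorem convolve_comp_tensorFst_comp_tensorSnd (m : A →ₗ[R] A →ₗ[R] A) (f g : B →ₗ[R] A) :
    convolve m (f ∘ₗ (tensorFst R B).toLinearMap) (g ∘ₗ (tensorSnd R B).toLinearMap) =
      TensorProduct.lift (m.compl₁₂ f g) := by
  rw [convolve, ← map_comp_pair, pair_tensorFst_tensorSnd]
  ext; simp

end Projections

section TensorOperations

variable {R M N P Q : Type*} [CommSemiring R] [AddCommMonoid M] [Module R M]
  [AddCommMonoid N] [Module R N] [AddCommMonoid P] [Module R P] [AddCommMonoid Q] [Module R Q]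

theorem map_map₂ {m : M →ₗ[R] M →ₗ[R] M} {n : N →ₗ[R] N →ₗ[R] N} {p : P →ₗ[R] P →ₗ[R] P}
    {q : Q →ₗ[R] Q →ₗ[R] Q} {φ : M →ₗ[R] P} {ψ : N →ₗ[R] Q}
    (hφ : ∀ u v, φ (m u v) = p (φ u) (φ v)) (hψ : ∀ u v, ψ (n u v) = q (ψ u) (ψ v))
    (w w' : M ⊗[R] N) :
    TensorProduct.map φ ψ (TensorProduct.map₂ m n w w') =
      TensorProduct.map₂ p q (TensorProduct.map φ ψ w) (TensorProduct.map φ ψ w') := by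
  have h : (TensorProduct.map₂ m n).compr₂ (TensorProduct.map φ ψ) =
      (TensorProduct.map₂ p q).compl₁₂ (TensorProduct.map φ ψ) (TensorProduct.map φ ψ) := by
    ext; simp [hφ, hψ]
  exact LinearMap.congr_fun₂ h w w'

theorem tensorTensorTensorComm_map₂_map₂ (m : M →ₗ[R] M →ₗ[R] M) (n : N →ₗ[R] N →ₗ[R] N)
    (p : P →ₗ[R] P →ₗ[R] P) (q : Q →ₗ[R] Q →ₗ[R] Q) (w w' : (M ⊗[R] N) ⊗[R] (P ⊗[R] Q)) :
    TensorProduct.tensorTensorTensorComm R M N P Q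
        (TensorProduct.map₂ (TensorProduct.map₂ m n) (TensorProduct.map₂ p q) w w') =
      TensorProduct.map₂ (TensorProduct.map₂ m p) (TensorProduct.map₂ n q)
        (TensorProduct.tensorTensorTensorComm R M N P Q w)
        (TensorProduct.tensorTensorTensorComm R M N P Q w') := by
  have h : (TensorProduct.map₂ (TensorProduct.map₂ m n) (TensorProduct.map₂ p q)).compr₂
        (TensorProduct.tensorTensorTensorComm R M N P Q).toLinearMap =
      (TensorProduct.map₂ (TensorProduct.map₂ m p) (TensorProduct.map₂ n q)).compl₁₂
        (TensorProduct.tensorTensorTensorComm R M N P Q).toLinearMap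
        (TensorProduct.tensorTensorTensorComm R M N P Q).toLinearMap := by
    ext; simp
  exact LinearMap.congr_fun₂ h w w'

end TensorOperations

section Cofree

theorem mem_range_map_ker_subtype {R M N P Q : Type*} [CommRing R] [AddCommGroup M] [Module R M]
    [AddCommGroup N] [Module R N] [AddCommGroup P] [Module R P] [AddCommGroup Q] [Module R Q]
    {φ : M →ₗ[R] P} {ψ : N →ₗ[R] Q} [Module.Flat R M] [Module.Flat R P]
    [Module.Flat R (LinearMap.ker ψ)] {w : M ⊗[R] N}
    (hφ : φ.rTensor N w = 0) (hψ : ψ.lTensor M w = 0) :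
    w ∈ LinearMap.range
      (TensorProduct.map (LinearMap.ker φ).subtype (LinearMap.ker ψ).subtype) := by
  obtain ⟨v, rfl⟩ := (Module.Flat.lTensor_exact M (LinearMap.exact_subtype_ker_map ψ) w).1 hψ
  have hv : φ.rTensor (LinearMap.ker ψ) v = 0 := by
    apply Module.Flat.lTensor_preserves_injective_linearMap (M := P) _
      (LinearMap.ker ψ).subtype_injective
    rw [map_zero, ← hφ, ← LinearMap.comp_apply, ← LinearMap.comp_apply,
      LinearMap.lTensor_comp_rTensor, LinearMap.rTensor_comp_lTensor]
  obtain ⟨u, rfl⟩ :=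
    (Module.Flat.rTensor_exact _ (LinearMap.exact_subtype_ker_map φ) v).1 hv
  exact ⟨u, by rw [← LinearMap.comp_apply, LinearMap.lTensor_comp_rTensor]⟩

variable {k C M : Type*} [Field k] [AddCommGroup C] [Module k C] [AddCommGroup M] [Module k M]
  [Coalgebra k C]

theorem pair_id_id : pair LinearMap.id LinearMap.id = (comul : C →ₗ[k] C ⊗[k] C) := by
  rw [pair, TensorProduct.map_id, LinearMap.id_comp]

theorem isSubcoalg_ker_pair_id [IsCocomm k C] (h : C →ₗ[k] M) :
    IsSubcoalg k (comul (R := k) (A := C)) (LinearMap.ker (pair h LinearMap.id)) := by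
  intro x hx
  have hr : pair LinearMap.id (pair h LinearMap.id) x = 0 := by
    have e : pair LinearMap.id (pair h LinearMap.id) =
        (TensorProduct.leftComm k M C C).toLinearMap ∘ₗ
          (comul (R := k) (A := C)).lTensor M ∘ₗ pair h LinearMap.id := by
      rw [← leftComm_comp_pair_pair, pair_id_id, LinearMap.lTensor, map_comp_pair]
      rfl
    rw [e, LinearMap.comp_apply, LinearMap.comp_apply, LinearMap.mem_ker.1 hx, map_zero, map_zero]
  have hl : pair (pair h LinearMap.id) LinearMap.id x = 0 := by
    rw [← comm_comp_pair, LinearMap.comp_apply, hr, map_zero]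
  exact mem_range_map_ker_subtype hl hr

theorem sSup_isSubcoalg_eq_ker [IsCocomm k C] (h : C →ₗ[k] M) :
    sSup {D : Submodule k C | IsSubcoalg k (comul (R := k) (A := C)) D ∧ ∀ x ∈ D, h x = 0} =
      LinearMap.ker (pair h LinearMap.id) := by
  apply le_antisymm
  · refine sSup_le fun D ⟨hD, hD0⟩ x hx => ?_
    obtain ⟨w, hw⟩ := hD x hx
    have h0 : h ∘ₗ D.subtype = 0 := LinearMap.ext fun y => hD0 y y.2
    rw [LinearMap.mem_ker, pair, LinearMap.comp_apply, ← hw, ← LinearMap.comp_apply,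
      ← TensorProduct.map_comp, h0, TensorProduct.map_zero_left, LinearMap.zero_apply]
  · refine le_sSup ⟨isSubcoalg_ker_pair_id h, fun x hx => ?_⟩
    have e : (TensorProduct.rid k M).toLinearMap ∘ₗ counit.lTensor M ∘ₗ
        pair h LinearMap.id = h := by
      rw [LinearMap.lTensor, map_comp_pair]
      exact rid_comp_pair_counit h
    rw [← e, LinearMap.comp_apply, LinearMap.comp_apply, LinearMap.mem_ker.1 hx, map_zero,
      map_zero]

theorem mem_sSup_isSubcoalg_iff [IsCocomm k C] {f g : C →ₗ[k] M} {x : C} :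
    x ∈ sSup {D : Submodule k C |
        IsSubcoalg k (comul (R := k) (A := C)) D ∧ ∀ y ∈ D, f y = g y} ↔
      pair f LinearMap.id x = pair g LinearMap.id x := by
  have h := sSup_isSubcoalg_eq_ker (f - g)
  simp only [LinearMap.sub_apply, sub_eq_zero] at h
  have hpair : pair (f - g) LinearMap.id x = pair f LinearMap.id x - pair g LinearMap.id x :=
    LinearMap.congr_fun (LinearMap.rTensor_sub f g) (comul x)
  rw [h, LinearMap.mem_ker, hpair, sub_eq_zero]

end Cofree

section Bialgebra

variable {k A B : Type*} [Field k] [AddCommGroup A] [Module k A] [AddCommGroup B] [Module k B]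

/-- The coalgebra underlying a bialgebra with divisions. -/
@[reducible]
noncomputable def DivBialg.toCoalgebra (S : DivBialg k A) : Coalgebra k A where
  comul := S.Δ
  counit := S.ε
  coassoc := LinearMap.ext S.coassoc
  rTensor_counit_comp_comul :=
    LinearMap.ext fun u => (TensorProduct.lid k A).injective (by simpa using S.counit_left u)
  lTensor_counit_comp_comul :=
    LinearMap.ext fun u => (TensorProduct.rid k A).injective (by simpa using S.counit_right u)

theorem DivBialg.isCocomm (S : DivBialg k A) : @IsCocomm k A _ _ _ S.toCoalgebra :=
  let := S.toCoalgebra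
  ⟨LinearMap.ext S.cocomm⟩

variable {SA : DivBialg k A} {SB : DivBialg k B} {π : A →ₗ[k] B}

theorem mem_Fsub_iff {b : B} {x : A} :
    x ∈ Fsub k SA b π ↔ π.rTensor A (SA.Δ x) = b ⊗ₜ x := by
  let := SA.toCoalgebra
  have := SA.isCocomm
  have h := mem_sSup_isSubcoalg_iff (f := π) (g := constMap A b) (x := x)
  rwa [pair_constMap_left] at h

theorem mem_pbSub_iff {t : A ⊗[k] A} :
    t ∈ pbSub k SA π ↔ (pbFst k SA π).rTensor (A ⊗[k] A) (tcomul k SA t) =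
      (pbSnd k SA π).rTensor (A ⊗[k] A) (tcomul k SA t) :=
  let := SA.toCoalgebra
  have := SA.isCocomm
  mem_sSup_isSubcoalg_iff (f := pbFst k SA π) (g := pbSnd k SA π)

theorem tcomul_map₂_mul (t t' : A ⊗[k] A) :
    tcomul k SA (TensorProduct.map₂ SA.mul SA.mul t t') =
      TensorProduct.map₂ (TensorProduct.map₂ SA.mul SA.mul) (TensorProduct.map₂ SA.mul SA.mul)
        (tcomul k SA t) (tcomul k SA t') := by
  simp only [tcomul, LinearMap.comp_apply, map_map₂ SA.Δ_mul SA.Δ_mul]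
  exact tensorTensorTensorComm_map₂_map₂ _ _ _ _ _ _

theorem pbFst_map₂_mul (hπ : DivBialgHom k SA SB π) (t t' : A ⊗[k] A) :
    pbFst k SA π (TensorProduct.map₂ SA.mul SA.mul t t') =
      SB.mul (pbFst k SA π t) (pbFst k SA π t') := by
  have h : (TensorProduct.map₂ SA.mul SA.mul).compr₂ (pbFst k SA π) =
      SB.mul.compl₁₂ (pbFst k SA π) (pbFst k SA π) := by
    ext; simp [pbFst, SA.ε_mul, hπ.map_mul, smul_smul, mul_comm]
  exact LinearMap.congr_fun₂ h t t'

theorem pbSnd_map₂_mul (hπ : DivBialgHom k SA SB π) (t t' : A ⊗[k] A) :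
    pbSnd k SA π (TensorProduct.map₂ SA.mul SA.mul t t') =
      SB.mul (pbSnd k SA π t) (pbSnd k SA π t') := by
  have h : (TensorProduct.map₂ SA.mul SA.mul).compr₂ (pbSnd k SA π) =
      SB.mul.compl₁₂ (pbSnd k SA π) (pbSnd k SA π) := by
    ext; simp [pbSnd, SA.ε_mul, hπ.map_mul, smul_smul, mul_comm]
  exact LinearMap.congr_fun₂ h t t'

theorem map₂_mul_mem_pbSub (hπ : DivBialgHom k SA SB π) {t t' : A ⊗[k] A}
    (ht : t ∈ pbSub k SA π) (ht' : t' ∈ pbSub k SA π) :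
    TensorProduct.map₂ SA.mul SA.mul t t' ∈ pbSub k SA π := by
  rw [mem_pbSub_iff] at ht ht' ⊢
  simp only [LinearMap.rTensor] at ht ht' ⊢
  rw [tcomul_map₂_mul, map_map₂ (pbFst_map₂_mul hπ) fun _ _ => rfl,
    map_map₂ (pbSnd_map₂_mul hπ) fun _ _ => rfl]
  rw [ht, ht']

/-- The componentwise multiplication of `A ⊗_B A`. -/
noncomputable def pbMul (hπ : DivBialgHom k SA SB π) :
    pbSub k SA π →ₗ[k] pbSub k SA π →ₗ[k] pbSub k SA π :=
  LinearMap.mk₂ k (fun t t' =>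
      ⟨TensorProduct.map₂ SA.mul SA.mul t t', map₂_mul_mem_pbSub hπ t.2 t'.2⟩)
    (fun _ _ _ => Subtype.ext (by simp)) (fun _ _ _ => Subtype.ext (by simp))
    (fun _ _ _ => Subtype.ext (by simp)) (fun _ _ _ => Subtype.ext (by simp))

theorem pbMul_coe (hπ : DivBialgHom k SA SB π) (t t' : pbSub k SA π) :
    (pbSub k SA π).subtype (pbMul hπ t t') =
      TensorProduct.map₂ SA.mul SA.mul ((pbSub k SA π).subtype t) ((pbSub k SA π).subtype t') :=
  rfl

end Bialgebra

section CoalgebraHoms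

variable {k A B C : Type*} [Field k] [AddCommGroup A] [Module k A] [AddCommGroup B] [Module k B]
  [AddCommGroup C] [Module k C] [Coalgebra k C]

/-- `α : C → A` is a morphism of coalgebras, for the coalgebra structure of `A` bundled in `S`. -/
structure IsCoalgHom (S : DivBialg k A) (α : C →ₗ[k] A) : Prop where
  Δ_comp : S.Δ ∘ₗ α = pair α α
  ε_comp : S.ε ∘ₗ α = counit

variable {S : DivBialg k A} {α β : C →ₗ[k] A}

theorem IsCoalgHom.comp {D : Type*} [AddCommGroup D] [Module k D] [Coalgebra k D]
    (hα : IsCoalgHom S α) (q : D →ₗc[k] C) : IsCoalgHom S (α ∘ₗ q.toLinearMap) where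
  Δ_comp := by rw [← LinearMap.comp_assoc, hα.Δ_comp, pair_comp_coalgHom]
  ε_comp := by rw [← LinearMap.comp_assoc, hα.ε_comp, q.counit_comp]

theorem DivBialgHom.comp_isCoalgHom {SB : DivBialg k B} {z : B →ₗ[k] A}
    (hz : DivBialgHom k SB S z) {q : C →ₗ[k] B} (hq : IsCoalgHom SB q) :
    IsCoalgHom S (z ∘ₗ q) where
  Δ_comp := by
    have hΔ : S.Δ ∘ₗ z = TensorProduct.map z z ∘ₗ SB.Δ := (LinearMap.ext hz.map_Δ).symm
    rw [← LinearMap.comp_assoc, hΔ, LinearMap.comp_assoc, hq.Δ_comp, map_comp_pair]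
  ε_comp := by
    have hε : S.ε ∘ₗ z = SB.ε := LinearMap.ext hz.map_ε
    rw [← LinearMap.comp_assoc, hε, hq.ε_comp]

theorem convolve_mul_constMap_one (S : DivBialg k A) (f : C →ₗ[k] A) :
    convolve S.mul f (constMap C S.one) = f := by
  rw [convolve_constMap_right]
  exact LinearMap.ext fun c => S.mul_one (f c)

theorem convolve_constMap_one_mul (S : DivBialg k A) (f : C →ₗ[k] A) :
    convolve S.mul (constMap C S.one) f = f := by
  rw [convolve_constMap_left]
  exact LinearMap.ext fun c => S.one_mul (f c)

theorem convolve_mul_constMap_constMap (S : DivBialg k A) (x y : A) :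
    convolve S.mul (constMap C x) (constMap C y) = constMap C (S.mul x y) := by
  rw [convolve_constMap_left]
  ext; simp [constMap]

theorem IsCoalgHom.constMap_one (S : DivBialg k A) : IsCoalgHom S (constMap C S.one) where
  Δ_comp := by
    rw [pair_constMap_left]
    ext; simp [constMap, S.Δ_one]
  ε_comp := by
    ext; simp [constMap, S.ε_one]

theorem IsCoalgHom.convolve_cancel_left {d m : A →ₗ[k] A →ₗ[k] A}
    (h : ∀ u v, TensorProduct.lift d ((m.flip v).lTensor A (S.Δ u)) = S.ε u • v)
    (hα : IsCoalgHom S α) (g : C →ₗ[k] A) :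
    convolve d α (convolve m α g) = g := by
  set T : (A ⊗[k] A) ⊗[k] A →ₗ[k] A := TensorProduct.lift d ∘ₗ
    (TensorProduct.lift m).lTensor A ∘ₗ (TensorProduct.assoc k A A A).toLinearMap with hT
  have hTΔ : T ∘ₗ S.Δ.rTensor A = (TensorProduct.lid k A).toLinearMap ∘ₗ S.ε.rTensor A := by
    refine TensorProduct.ext' fun u v => ?_
    have hv : T ∘ₗ (TensorProduct.mk k (A ⊗[k] A) A).flip v =
        TensorProduct.lift d ∘ₗ (m.flip v).lTensor A := by
      ext; simp [hT]
    simpa [h] using LinearMap.congr_fun hv (S.Δ u)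
  calc
    _ = T ∘ₗ pair (pair α α) g := by
      rw [hT, LinearMap.comp_assoc, LinearMap.comp_assoc, assoc_comp_pair_pair,
        LinearMap.lTensor, map_comp_pair]
      rfl
    _ = (T ∘ₗ S.Δ.rTensor A) ∘ₗ pair α g := by
      rw [← hα.Δ_comp, LinearMap.comp_assoc (pair α g), LinearMap.rTensor, map_comp_pair,
        LinearMap.id_comp]
    _ = (TensorProduct.lid k A).toLinearMap ∘ₗ pair counit g := by
      rw [hTΔ, LinearMap.comp_assoc, LinearMap.rTensor, map_comp_pair, hα.ε_comp,
        LinearMap.id_comp]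
    _ = g := lid_comp_pair_counit g

theorem IsCoalgHom.convolve_ld_self (hα : IsCoalgHom S α) :
    convolve S.ld α α = constMap C S.one := by
  have h := hα.convolve_cancel_left S.ld_mul_cancel (constMap C S.one)
  rwa [convolve_mul_constMap_one] at h

variable [IsCocomm k C]

theorem IsCoalgHom.convolve_cancel_right {d m : A →ₗ[k] A →ₗ[k] A}
    (h : ∀ u v, TensorProduct.lift d ((m v).rTensor A (S.Δ u)) = S.ε u • v)
    (hα : IsCoalgHom S α) (g : C →ₗ[k] A) :
    convolve d (convolve m g α) α = g := by
  rw [← convolve_flip d, ← convolve_flip m]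
  refine hα.convolve_cancel_left (fun u v => ?_) g
  have hv : TensorProduct.lift d.flip ∘ₗ (m.flip.flip v).lTensor A =
      TensorProduct.lift d ∘ₗ (m v).rTensor A ∘ₗ (TensorProduct.comm k A A).toLinearMap := by
    ext; simp
  rw [← h, ← LinearMap.comp_apply, hv]
  simp [S.cocomm]

theorem IsCoalgHom.convolve_rd_self (hα : IsCoalgHom S α) :
    convolve S.rd α α = constMap C S.one := by
  have h := hα.convolve_cancel_right S.rd_mul_cancel (constMap C S.one)
  rwa [convolve_constMap_one_mul] at h

theorem IsCoalgHom.convolve_mul (hα : IsCoalgHom S α) (hβ : IsCoalgHom S β) :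
    IsCoalgHom S (convolve S.mul α β) where
  Δ_comp := by
    rw [comp_convolve S.Δ_mul, hα.Δ_comp, hβ.Δ_comp, convolve_map₂_pair]
  ε_comp := by
    have hε : ∀ u v, S.ε (S.mul u v) = LinearMap.mul k k (S.ε u) (S.ε v) := S.ε_mul
    rw [comp_convolve hε, hα.ε_comp, hβ.ε_comp]
    nth_rewrite 1 [counit_eq_constMap]
    rw [convolve_constMap_left]
    ext; simp

end CoalgebraHoms

section Over

variable {k A B C : Type*} [Field k] [AddCommGroup A] [Module k A] [AddCommGroup B] [Module k B]
  [AddCommGroup C] [Module k C] [Coalgebra k C]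

/-- `f : C → A` lies over `g : C → B`: `Σ π(f(c)₍₁₎) ⊗ f(c)₍₂₎ = Σ g(c₍₁₎) ⊗ f(c₍₂₎)`.
For a coalgebra morphism `f` this says `π ∘ f = g`. -/
def IsOver (SA : DivBialg k A) (π : A →ₗ[k] B) (g : C →ₗ[k] B) (f : C →ₗ[k] A) : Prop :=
  π.rTensor A ∘ₗ SA.Δ ∘ₗ f = pair g f

variable {SA : DivBialg k A} {SB : DivBialg k B} {π : A →ₗ[k] B}

theorem IsCoalgHom.isOver {α : C →ₗ[k] A} (hα : IsCoalgHom SA α) : IsOver SA π (π ∘ₗ α) α := by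
  rw [IsOver, hα.Δ_comp, LinearMap.rTensor, map_comp_pair, LinearMap.id_comp]

theorem isOver_constMap {b : B} {x : A} (hx : x ∈ Fsub k SA b π) :
    IsOver SA π (constMap C b) (constMap C x) := by
  rw [IsOver, pair_constMap_left]
  ext; simp [constMap, mem_Fsub_iff.1 hx]

theorem tcomul_comp_pair (f f' : C →ₗ[k] A) : tcomul k SA ∘ₗ pair f f' =
    (TensorProduct.tensorTensorTensorComm k A A A A).toLinearMap ∘ₗ
      pair (SA.Δ ∘ₗ f) (SA.Δ ∘ₗ f') := by
  rw [tcomul, LinearMap.comp_assoc, map_comp_pair]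

theorem IsOver.rTensor_pbFst {g : C →ₗ[k] B} {f : C →ₗ[k] A} (hf : IsOver SA π g f)
    (f' : C →ₗ[k] A) :
    (pbFst k SA π).rTensor (A ⊗[k] A) ∘ₗ tcomul k SA ∘ₗ pair f f' = pair g (pair f f') := by
  have hfst : (pbFst k SA π).rTensor (A ⊗[k] A) ∘ₗ
      (TensorProduct.tensorTensorTensorComm k A A A A).toLinearMap =
      (TensorProduct.assoc k B A A).toLinearMap ∘ₗ TensorProduct.map (π.rTensor A)
        ((TensorProduct.lid k A).toLinearMap ∘ₗ SA.ε.rTensor A) := by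
    ext; simp [pbFst, TensorProduct.smul_tmul']
  have hcounit : ((TensorProduct.lid k A).toLinearMap ∘ₗ SA.ε.rTensor A) ∘ₗ SA.Δ ∘ₗ f' = f' :=
    LinearMap.ext fun c => SA.counit_left (f' c)
  rw [tcomul_comp_pair, ← LinearMap.comp_assoc, hfst, LinearMap.comp_assoc, map_comp_pair,
    hf, hcounit, assoc_comp_pair_pair]

variable [IsCocomm k C]

theorem IsOver.lTensor_comp {g : C →ₗ[k] B} {f : C →ₗ[k] A} (hf : IsOver SA π g f) :
    π.lTensor A ∘ₗ SA.Δ ∘ₗ f = pair f g := by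
  have hcomm : (TensorProduct.comm k B A).toLinearMap ∘ₗ π.rTensor A ∘ₗ SA.Δ =
      π.lTensor A ∘ₗ SA.Δ := by
    refine LinearMap.ext fun u => ?_
    conv_rhs => rw [LinearMap.comp_apply, ← SA.cocomm u]
    exact LinearMap.congr_fun (TensorProduct.map_comp_comm_eq LinearMap.id π).symm (SA.Δ u)
  rw [← LinearMap.comp_assoc, ← hcomm, ← comm_comp_pair, ← hf]
  rfl

theorem IsOver.convolve {m : A →ₗ[k] A →ₗ[k] A} {n : B →ₗ[k] B →ₗ[k] B}
    (hΔ : ∀ u v, SA.Δ (m u v) = TensorProduct.map₂ m m (SA.Δ u) (SA.Δ v))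
    (hπ : ∀ u v, π (m u v) = n (π u) (π v)) {g g' : C →ₗ[k] B} {f f' : C →ₗ[k] A}
    (hf : IsOver SA π g f) (hf' : IsOver SA π g' f') :
    IsOver SA π (convolve n g g') (convolve m f f') := by
  have hm : ∀ u v, (π.rTensor A ∘ₗ SA.Δ) (m u v) = TensorProduct.map₂ n m
      ((π.rTensor A ∘ₗ SA.Δ) u) ((π.rTensor A ∘ₗ SA.Δ) v) := fun u v => by
    simp only [LinearMap.comp_apply, hΔ]
    exact map_map₂ hπ (fun _ _ => rfl) _ _
  rw [IsOver, ← LinearMap.comp_assoc, comp_convolve hm, LinearMap.comp_assoc,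
    LinearMap.comp_assoc, hf, hf', convolve_map₂_pair]

theorem IsOver.rTensor_pbSnd {g : C →ₗ[k] B} {f' : C →ₗ[k] A} (hf' : IsOver SA π g f')
    (f : C →ₗ[k] A) :
    (pbSnd k SA π).rTensor (A ⊗[k] A) ∘ₗ tcomul k SA ∘ₗ pair f f' = pair g (pair f f') := by
  have hsnd : (pbSnd k SA π).rTensor (A ⊗[k] A) ∘ₗ
      (TensorProduct.tensorTensorTensorComm k A A A A).toLinearMap =
      (TensorProduct.leftComm k A B A).toLinearMap ∘ₗ TensorProduct.map
        ((TensorProduct.lid k A).toLinearMap ∘ₗ SA.ε.rTensor A) (π.rTensor A) := by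
    refine TensorProduct.ext_fourfold' fun u v u' v' => ?_
    simp only [TensorProduct.tensorTensorTensorComm_tmul, LinearMap.rTensor_tmul, pbSnd,
      LinearMap.comp_apply, TensorProduct.map_tmul, LinearEquiv.coe_coe, TensorProduct.lid_tmul,
      TensorProduct.leftComm_tmul, TensorProduct.smul_tmul, TensorProduct.smul_tmul']
  have hcounit : ((TensorProduct.lid k A).toLinearMap ∘ₗ SA.ε.rTensor A) ∘ₗ SA.Δ ∘ₗ f = f :=
    LinearMap.ext fun c => SA.counit_left (f c)
  rw [tcomul_comp_pair, ← LinearMap.comp_assoc, hsnd, LinearMap.comp_assoc, map_comp_pair,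
    hf', hcounit, leftComm_comp_pair_pair]

theorem IsOver.pair_mem_pbSub {g : C →ₗ[k] B} {f f' : C →ₗ[k] A} (hf : IsOver SA π g f)
    (hf' : IsOver SA π g f') (c : C) : pair f f' c ∈ pbSub k SA π :=
  mem_pbSub_iff.2 (LinearMap.congr_fun ((hf.rTensor_pbFst f').trans (hf'.rTensor_pbSnd f).symm) c)

/-- The map `C → A ⊗_B A` induced by two maps `f`, `f'` over the same `g`. -/
noncomputable def IsOver.toPullback {g : C →ₗ[k] B} {f f' : C →ₗ[k] A} (hf : IsOver SA π g f)
    (hf' : IsOver SA π g f') : C →ₗ[k] pbSub k SA π :=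
  (pair f f').codRestrict _ (hf.pair_mem_pbSub hf')

theorem convolve_pbMul_toPullback (hπ : DivBialgHom k SA SB π) {g g' : C →ₗ[k] B}
    {f₁ f₂ f₁' f₂' : C →ₗ[k] A} (h₁ : IsOver SA π g f₁) (h₂ : IsOver SA π g f₂)
    (h₁' : IsOver SA π g' f₁') (h₂' : IsOver SA π g' f₂') :
    convolve (pbMul hπ) (h₁.toPullback h₂) (h₁'.toPullback h₂') =
      (h₁.convolve SA.Δ_mul hπ.map_mul h₁').toPullback (h₂.convolve SA.Δ_mul hπ.map_mul h₂') := by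
  have hsub : (pbSub k SA π).subtype ∘ₗ
      convolve (pbMul hπ) (h₁.toPullback h₂) (h₁'.toPullback h₂') =
      convolve (TensorProduct.map₂ SA.mul SA.mul) (pair f₁ f₂) (pair f₁' f₂') :=
    comp_convolve (m := pbMul hπ) (φ := (pbSub k SA π).subtype) (φ₁ := (pbSub k SA π).subtype)
      (φ₂ := (pbSub k SA π).subtype) (pbMul_coe hπ) (h₁.toPullback h₂) (h₁'.toPullback h₂')
  rw [convolve_map₂_pair] at hsub
  exact LinearMap.ext fun c => Subtype.ext (LinearMap.congr_fun hsub c)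

end Over

section BoxSum

variable {k A B C : Type*} [Field k] [AddCommGroup A] [Module k A] [AddCommGroup B] [Module k B]
  [AddCommGroup C] [Module k C]

/-- A unital magma `(π : A → B, ⊞, 0)` over `B`, with `⊞ = bp` and `0 = z`: a linear multiplicative
operation on `A ⊗_B A` having the section `z` as a two-sided unit. -/
structure UnitalMagmaOver (SA : DivBialg k A) (SB : DivBialg k B) (π : A →ₗ[k] B)
    (z : B →ₗ[k] A) where
  hom_π : DivBialgHom k SA SB π
  hom_z : DivBialgHom k SB SA z
  section_eq : π ∘ₗ z = LinearMap.id
  bp : pbSub k SA π →ₗ[k] A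
  bp_mul : ∀ t t' : pbSub k SA π, bp (pbMul hom_π t t') = SA.mul (bp t) (bp t')
  bp_unit_right : ∀ (u : A) (h : (z ∘ₗ π).lTensor A (SA.Δ u) ∈ pbSub k SA π),
    bp ⟨(z ∘ₗ π).lTensor A (SA.Δ u), h⟩ = u
  bp_unit_left : ∀ (u : A) (h : (z ∘ₗ π).rTensor A (SA.Δ u) ∈ pbSub k SA π),
    bp ⟨(z ∘ₗ π).rTensor A (SA.Δ u), h⟩ = u

variable {SA : DivBialg k A} {SB : DivBialg k B} {π : A →ₗ[k] B} {z : B →ₗ[k] A}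

/-- The unital magma over `B` underlying an abelian group over `B`. -/
noncomputable def BoxPlusData.toUnitalMagmaOver (P : BoxPlusData k SA SB π z)
    (hπ : DivBialgHom k SA SB π) (hz : DivBialgHom k SB SA z) (hsec : π ∘ₗ z = LinearMap.id) :
    UnitalMagmaOver SA SB π z where
  hom_π := hπ
  hom_z := hz
  section_eq := hsec
  bp := P.bp
  bp_mul t t' := P.bp_mul t t' _
  bp_unit_right := P.bp_unit_right
  bp_unit_left := P.bp_unit_left

variable [Coalgebra k C]

theorem UnitalMagmaOver.isOver_section (P : UnitalMagmaOver SA SB π z) {g : C →ₗ[k] B}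
    (hg : IsCoalgHom SB g) : IsOver SA π g (z ∘ₗ g) := by
  simpa only [← LinearMap.comp_assoc, P.section_eq, LinearMap.id_comp] using
    (P.hom_z.comp_isCoalgHom hg).isOver (π := π)

variable [IsCocomm k C] {P : UnitalMagmaOver SA SB π z}

/-- `h = f ⊞ f'`, that is `h(c) = ⊞(Σ f(c₍₁₎) ⊗ f'(c₍₂₎))`, for maps `f`, `f'` over `g`. -/
structure IsBoxSum (P : UnitalMagmaOver SA SB π z) (g : C →ₗ[k] B) (f f' h : C →ₗ[k] A) :
    Prop where
  left : IsOver SA π g f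
  right : IsOver SA π g f'
  bp_comp : P.bp ∘ₗ left.toPullback right = h

namespace IsBoxSum

theorem unique {g g' : C →ₗ[k] B} {f f' h h' : C →ₗ[k] A} (H : IsBoxSum P g f f' h)
    (H' : IsBoxSum P g' f f' h') : h = h' :=
  H.bp_comp.symm.trans H'.bp_comp

theorem mul {g g' : C →ₗ[k] B} {f₁ f₂ f f₁' f₂' f' : C →ₗ[k] A} (H : IsBoxSum P g f₁ f₂ f)
    (H' : IsBoxSum P g' f₁' f₂' f') :
    IsBoxSum P (convolve SB.mul g g') (convolve SA.mul f₁ f₁') (convolve SA.mul f₂ f₂')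
      (convolve SA.mul f f') where
  left := H.left.convolve SA.Δ_mul P.hom_π.map_mul H'.left
  right := H.right.convolve SA.Δ_mul P.hom_π.map_mul H'.right
  bp_comp := by
    rw [← convolve_pbMul_toPullback P.hom_π H.left H.right H'.left H'.right,
      comp_convolve P.bp_mul, H.bp_comp, H'.bp_comp]

end IsBoxSum

namespace UnitalMagmaOver

theorem isBoxSum_zero_right (P : UnitalMagmaOver SA SB π z) {g : C →ₗ[k] B} {f : C →ₗ[k] A}
    (hg : IsCoalgHom SB g) (hf : IsOver SA π g f) : IsBoxSum P g f (z ∘ₗ g) f where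
  left := hf
  right := P.isOver_section hg
  bp_comp := by
    have h : (z ∘ₗ π).lTensor A ∘ₗ SA.Δ ∘ₗ f = pair f (z ∘ₗ g) := by
      rw [LinearMap.lTensor_comp, LinearMap.comp_assoc, hf.lTensor_comp, LinearMap.lTensor,
        map_comp_pair, LinearMap.id_comp]
    refine LinearMap.ext fun c => ?_
    rw [← P.bp_unit_right (f c)
      (LinearMap.congr_fun h c ▸ hf.pair_mem_pbSub (P.isOver_section hg) c)]
    exact congrArg P.bp (Subtype.ext (LinearMap.congr_fun h c).symm)

theorem isBoxSum_zero_left (P : UnitalMagmaOver SA SB π z) {g : C →ₗ[k] B} {f : C →ₗ[k] A}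
    (hg : IsCoalgHom SB g) (hf : IsOver SA π g f) : IsBoxSum P g (z ∘ₗ g) f f where
  left := P.isOver_section hg
  right := hf
  bp_comp := by
    have h : (z ∘ₗ π).rTensor A ∘ₗ SA.Δ ∘ₗ f = pair (z ∘ₗ g) f := by
      rw [LinearMap.rTensor_comp, LinearMap.comp_assoc, hf, LinearMap.rTensor,
        map_comp_pair, LinearMap.id_comp]
    refine LinearMap.ext fun c => ?_
    rw [← P.bp_unit_left (f c)
      (LinearMap.congr_fun h c ▸ (P.isOver_section hg).pair_mem_pbSub hf c)]
    exact congrArg P.bp (Subtype.ext (LinearMap.congr_fun h c).symm)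

theorem isBoxSum_section (P : UnitalMagmaOver SA SB π z) {g : C →ₗ[k] B}
    (hg : IsCoalgHom SB g) : IsBoxSum P g (z ∘ₗ g) (z ∘ₗ g) (z ∘ₗ g) :=
  P.isBoxSum_zero_right hg (P.isOver_section hg)

-- Eckmann–Hilton: `f ⊞ f' = (f · 1) ⊞ (1 · f') = (f ⊞ 1) · (1 ⊞ f') = f · f'`.
theorem isBoxSum_mul (P : UnitalMagmaOver SA SB π z) {f f' : C →ₗ[k] A}
    (hf : IsOver SA π (constMap C SB.one) f) (hf' : IsOver SA π (constMap C SB.one) f') :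
    IsBoxSum P (constMap C SB.one) f f' (convolve SA.mul f f') := by
  have hone : z ∘ₗ constMap C SB.one = constMap C SA.one := by
    ext; simp [constMap, P.hom_z.map_one]
  have H := (P.isBoxSum_zero_right (IsCoalgHom.constMap_one SB) hf).mul
    (P.isBoxSum_zero_left (IsCoalgHom.constMap_one SB) hf')
  rwa [hone, convolve_mul_constMap_one, convolve_mul_constMap_one, convolve_constMap_one_mul] at H

theorem isBoxSum_constMap (P : UnitalMagmaOver SA SB π z) {x x' : A}
    (hx : x ∈ Fsub k SA SB.one π) (hx' : x' ∈ Fsub k SA SB.one π) :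
    IsBoxSum P (constMap C SB.one) (constMap C x) (constMap C x') (constMap C (SA.mul x x')) := by
  rw [← convolve_mul_constMap_constMap]
  exact P.isBoxSum_mul (isOver_constMap hx) (isOver_constMap hx')

end UnitalMagmaOver

namespace IsBoxSum

variable {g : C →ₗ[k] B} {β β' γ : C →ₗ[k] A} {x x' : A}

theorem mul_constMap (H : IsBoxSum P g β β' γ) (hx : x ∈ Fsub k SA SB.one π)
    (hx' : x' ∈ Fsub k SA SB.one π) :
    IsBoxSum P g (convolve SA.mul β (constMap C x)) (convolve SA.mul β' (constMap C x'))
      (convolve SA.mul γ (constMap C (SA.mul x x'))) := by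
  simpa only [convolve_mul_constMap_one] using H.mul (P.isBoxSum_constMap hx hx')

theorem constMap_mul (H : IsBoxSum P g β β' γ) (hx : x ∈ Fsub k SA SB.one π)
    (hx' : x' ∈ Fsub k SA SB.one π) :
    IsBoxSum P g (convolve SA.mul (constMap C x) β) (convolve SA.mul (constMap C x') β')
      (convolve SA.mul (constMap C (SA.mul x x')) γ) := by
  simpa only [convolve_constMap_one_mul] using (P.isBoxSum_constMap hx hx').mul H

theorem convolve_ld (hg : IsCoalgHom SB g) (H : IsBoxSum P g β β' γ) :
    convolve SA.ld (z ∘ₗ g) γ =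
      convolve SA.mul (convolve SA.ld (z ∘ₗ g) β) (convolve SA.ld (z ∘ₗ g) β') := by
  have hα := P.hom_z.comp_isCoalgHom hg
  have over_one {δ : C →ₗ[k] A} (hδ : IsOver SA π g δ) :
      IsOver SA π (constMap C SB.one) (convolve SA.ld (z ∘ₗ g) δ) :=
    hg.convolve_ld_self ▸ (P.isOver_section hg).convolve SA.Δ_ld P.hom_π.map_ld hδ
  have H' := (P.isBoxSum_section hg).mul (P.isBoxSum_mul (over_one H.left) (over_one H.right))
  rw [hα.convolve_cancel_left SA.mul_ld_cancel, hα.convolve_cancel_left SA.mul_ld_cancel] at H'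
  rw [H.unique H', hα.convolve_cancel_left SA.ld_mul_cancel]

theorem convolve_rd (hg : IsCoalgHom SB g) (H : IsBoxSum P g β β' γ) :
    convolve SA.rd γ (z ∘ₗ g) =
      convolve SA.mul (convolve SA.rd β (z ∘ₗ g)) (convolve SA.rd β' (z ∘ₗ g)) := by
  have hα := P.hom_z.comp_isCoalgHom hg
  have over_one {δ : C →ₗ[k] A} (hδ : IsOver SA π g δ) :
      IsOver SA π (constMap C SB.one) (convolve SA.rd δ (z ∘ₗ g)) :=
    hg.convolve_rd_self ▸ hδ.convolve SA.Δ_rd P.hom_π.map_rd (P.isOver_section hg)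
  have H' := (P.isBoxSum_mul (over_one H.left) (over_one H.right)).mul (P.isBoxSum_section hg)
  rw [hα.convolve_cancel_right SA.mul_rd_cancel, hα.convolve_cancel_right SA.mul_rd_cancel] at H'
  rw [H.unique H', hα.convolve_cancel_right SA.rd_mul_cancel]

end IsBoxSum

end BoxSum

section Operators

variable {k A B : Type*} [Field k] [AddCommGroup A] [Module k A] [AddCommGroup B] [Module k B]
  [Coalgebra k B]

theorem hatOf_sweedCoreL (d : A →ₗ[k] A →ₗ[k] A) (α : B →ₗ[k] B →ₗ[k] A)
    (β : B →ₗ[k] B →ₗ[k] A →ₗ[k] A) (x : A) :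
    hatOf k (sweedCoreL k d α β) comul x =
      convolve d (TensorProduct.lift α) (TensorProduct.lift (β.compr₂ (LinearMap.applyₗ x))) := by
  have h : sweedCoreL k d α β ∘ₗ (TensorProduct.mk k _ A).flip x =
      TensorProduct.lift d ∘ₗ TensorProduct.map (TensorProduct.lift α)
        (TensorProduct.lift (β.compr₂ (LinearMap.applyₗ x))) ∘ₗ
          (TensorProduct.tensorTensorTensorComm k B B B B).toLinearMap := by
    ext; simp [sweedCoreL]
  rw [hatOf, ← LinearMap.comp_assoc, h]
  rfl

theorem hatOf_sweedCoreR (d : A →ₗ[k] A →ₗ[k] A) (α : B →ₗ[k] B →ₗ[k] A)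
    (β : B →ₗ[k] B →ₗ[k] A →ₗ[k] A) (x : A) :
    hatOf k (sweedCoreR k d α β) comul x =
      convolve d (TensorProduct.lift (β.compr₂ (LinearMap.applyₗ x))) (TensorProduct.lift α) := by
  have h : sweedCoreR k d α β ∘ₗ (TensorProduct.mk k _ A).flip x =
      TensorProduct.lift d ∘ₗ TensorProduct.map
        (TensorProduct.lift (β.compr₂ (LinearMap.applyₗ x))) (TensorProduct.lift α) ∘ₗ
          (TensorProduct.tensorTensorTensorComm k B B B B).toLinearMap := by
    ext; simp [sweedCoreR]
  rw [hatOf, ← LinearMap.comp_assoc, h]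
  rfl

theorem hat1Of_sweedCore1L (d : A →ₗ[k] A →ₗ[k] A) (γ : B →ₗ[k] A)
    (δ : B →ₗ[k] A →ₗ[k] A) (x : A) :
    hat1Of k (sweedCore1L k d γ δ) comul x = convolve d γ (δ.flip x) := by
  have h : sweedCore1L k d γ δ ∘ₗ (TensorProduct.mk k _ A).flip x =
      TensorProduct.lift d ∘ₗ TensorProduct.map γ (δ.flip x) := by
    ext; simp [sweedCore1L]
  rw [hat1Of, ← LinearMap.comp_assoc, h]
  rfl

theorem hat1Of_sweedCore1R (d : A →ₗ[k] A →ₗ[k] A) (γ : B →ₗ[k] A)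
    (δ : B →ₗ[k] A →ₗ[k] A) (x : A) :
    hat1Of k (sweedCore1R k d γ δ) comul x = convolve d (δ.flip x) γ := by
  have h : sweedCore1R k d γ δ ∘ₗ (TensorProduct.mk k _ A).flip x =
      TensorProduct.lift d ∘ₗ TensorProduct.map (δ.flip x) γ := by
    ext; simp [sweedCore1R]
  rw [hat1Of, ← LinearMap.comp_assoc, h]
  rfl

section OperatorWords

variable {S : DivBialg k A} {n : B →ₗ[k] B →ₗ[k] B} {z : B →ₗ[k] A}

local notation "fst" => CoalgHom.toLinearMap (tensorFst k B)
local notation "snd" => CoalgHom.toLinearMap (tensorSnd k B)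

theorem lift_mul_compl₁₂ (hz : ∀ b b', z (n b b') = S.mul (z b) (z b')) :
    TensorProduct.lift (S.mul.compl₁₂ z z) = z ∘ₗ convolve n fst snd := by
  rw [comp_convolve hz, convolve_comp_tensorFst_comp_tensorSnd]

theorem lHat_eq (hz : ∀ b b', z (n b b') = S.mul (z b) (z b')) (x : A) :
    lHat k S comul z x = convolve S.ld (z ∘ₗ convolve n fst snd)
      (convolve S.mul (z ∘ₗ fst) (convolve S.mul (z ∘ₗ snd) (constMap (B ⊗[k] B) x))) := by
  rw [lHat, hatOf_sweedCoreL, lift_mul_compl₁₂ hz, convolve_constMap_right,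
    ← LinearMap.comp_assoc, convolve_comp_tensorFst_comp_tensorSnd]
  rfl

theorem rHat_eq (hz : ∀ b b', z (n b b') = S.mul (z b) (z b')) (x : A) :
    rHat k S comul z x = convolve S.rd
      (convolve S.mul (convolve S.mul (constMap (B ⊗[k] B) x) (z ∘ₗ fst)) (z ∘ₗ snd))
      (z ∘ₗ convolve n fst snd) := by
  rw [rHat, hatOf_sweedCoreR, lift_mul_compl₁₂ hz, convolve_constMap_left,
    ← LinearMap.comp_assoc, convolve_comp_tensorFst_comp_tensorSnd]
  rfl

theorem sHat_eq (hz : ∀ b b', z (n b b') = S.mul (z b) (z b')) (x : A) :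
    sHat k S comul z x = convolve S.rd
      (convolve S.mul (z ∘ₗ fst) (convolve S.mul (constMap (B ⊗[k] B) x) (z ∘ₗ snd)))
      (z ∘ₗ convolve n fst snd) := by
  rw [sHat, hatOf_sweedCoreR, lift_mul_compl₁₂ hz, convolve_constMap_left,
    ← LinearMap.comp_assoc, convolve_comp_tensorFst_comp_tensorSnd]
  rfl

theorem sbarHat_eq (hz : ∀ b b', z (n b b') = S.mul (z b) (z b')) (x : A) :
    sbarHat k S comul z x = convolve S.ld (z ∘ₗ convolve n fst snd)
      (convolve S.mul (convolve S.mul (z ∘ₗ fst) (constMap (B ⊗[k] B) x)) (z ∘ₗ snd)) := by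
  rw [sbarHat, hatOf_sweedCoreL, lift_mul_compl₁₂ hz, convolve_constMap_right,
    ← LinearMap.comp_assoc, convolve_comp_tensorFst_comp_tensorSnd]
  rfl

theorem tHat_eq (S : DivBialg k A) (z : B →ₗ[k] A) (x : A) :
    tHat k S comul z x = convolve S.ld z (convolve S.mul (constMap B x) z) := by
  rw [tHat, hat1Of_sweedCore1L, convolve_constMap_left]
  rfl

theorem tbarHat_eq (S : DivBialg k A) (z : B →ₗ[k] A) (x : A) :
    tbarHat k S comul z x = convolve S.rd (convolve S.mul z (constMap B x)) z := by
  rw [tbarHat, hat1Of_sweedCore1R, convolve_constMap_right]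
  rfl

end OperatorWords

namespace UnitalMagmaOver

variable [IsCocomm k B] {SA : DivBialg k A} {SB : DivBialg k B} {π : A →ₗ[k] B} {z : B →ₗ[k] A}
  (P : UnitalMagmaOver SA SB π z) (hB : IsCoalgHom SB (LinearMap.id : B →ₗ[k] B)) {x x' : A}
  (hx : x ∈ Fsub k SA SB.one π) (hx' : x' ∈ Fsub k SA SB.one π)

include P hB hx hx'

theorem lHat_mul : lHat k SA comul z (SA.mul x x') =
    convolve SA.mul (lHat k SA comul z x) (lHat k SA comul z x') := by
  have h₁ := hB.comp (tensorFst k B)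
  have h₂ := hB.comp (tensorSnd k B)
  simp only [lHat_eq P.hom_z.map_mul]
  exact ((P.isBoxSum_section h₁).mul ((P.isBoxSum_section h₂).mul_constMap hx hx')).convolve_ld
    (h₁.convolve_mul h₂)

theorem rHat_mul : rHat k SA comul z (SA.mul x x') =
    convolve SA.mul (rHat k SA comul z x) (rHat k SA comul z x') := by
  have h₁ := hB.comp (tensorFst k B)
  have h₂ := hB.comp (tensorSnd k B)
  simp only [rHat_eq P.hom_z.map_mul]
  exact (((P.isBoxSum_section h₁).constMap_mul hx hx').mul (P.isBoxSum_section h₂)).convolve_rd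
    (h₁.convolve_mul h₂)

theorem sHat_mul : sHat k SA comul z (SA.mul x x') =
    convolve SA.mul (sHat k SA comul z x) (sHat k SA comul z x') := by
  have h₁ := hB.comp (tensorFst k B)
  have h₂ := hB.comp (tensorSnd k B)
  simp only [sHat_eq P.hom_z.map_mul]
  exact ((P.isBoxSum_section h₁).mul ((P.isBoxSum_section h₂).constMap_mul hx hx')).convolve_rd
    (h₁.convolve_mul h₂)

theorem sbarHat_mul : sbarHat k SA comul z (SA.mul x x') =
    convolve SA.mul (sbarHat k SA comul z x) (sbarHat k SA comul z x') := by
  have h₁ := hB.comp (tensorFst k B)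
  have h₂ := hB.comp (tensorSnd k B)
  simp only [sbarHat_eq P.hom_z.map_mul]
  exact (((P.isBoxSum_section h₁).mul_constMap hx hx').mul (P.isBoxSum_section h₂)).convolve_ld
    (h₁.convolve_mul h₂)

theorem tHat_mul : tHat k SA comul z (SA.mul x x') =
    convolve SA.mul (tHat k SA comul z x) (tHat k SA comul z x') := by
  simpa only [tHat_eq, LinearMap.comp_id] using
    ((P.isBoxSum_section hB).constMap_mul hx hx').convolve_ld hB

theorem tbarHat_mul : tbarHat k SA comul z (SA.mul x x') =
    convolve SA.mul (tbarHat k SA comul z x) (tbarHat k SA comul z x') := by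
  simpa only [tbarHat_eq, LinearMap.comp_id] using
    ((P.isBoxSum_section hB).mul_constMap hx hx').convolve_rd hB

end UnitalMagmaOver

end Operators

end FormalLoops

open FormalLoops in
theorem ops_multiplicative_on_Fsub_general {k A B : Type*} [Field k] [AddCommGroup A] [Module k A]
    [AddCommGroup B] [Module k B] {SA : DivBialg k A} {SB : DivBialg k B} {π : A →ₗ[k] B}
    {z : B →ₗ[k] A} (P : UnitalMagmaOver SA SB π z) :
    ∀ x ∈ Fsub k SA SB.one π, ∀ x' ∈ Fsub k SA SB.one π,
      (∀ b b' : B,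
        opL k SA SB.Δ z b b' (SA.mul x x')
          = (TensorProduct.lift SA.mul ∘ₗ
              TensorProduct.map (lHat k SA SB.Δ z x) (lHat k SA SB.Δ z x') ∘ₗ
              (TensorProduct.tensorTensorTensorComm k B B B B).toLinearMap)
            (SB.Δ b ⊗ₜ[k] SB.Δ b') ∧
        opR k SA SB.Δ z b b' (SA.mul x x')
          = (TensorProduct.lift SA.mul ∘ₗ
              TensorProduct.map (rHat k SA SB.Δ z x) (rHat k SA SB.Δ z x') ∘ₗ
              (TensorProduct.tensorTensorTensorComm k B B B B).toLinearMap)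
            (SB.Δ b ⊗ₜ[k] SB.Δ b') ∧
        opS k SA SB.Δ z b b' (SA.mul x x')
          = (TensorProduct.lift SA.mul ∘ₗ
              TensorProduct.map (sHat k SA SB.Δ z x) (sHat k SA SB.Δ z x') ∘ₗ
              (TensorProduct.tensorTensorTensorComm k B B B B).toLinearMap)
            (SB.Δ b ⊗ₜ[k] SB.Δ b') ∧
        opSbar k SA SB.Δ z b b' (SA.mul x x')
          = (TensorProduct.lift SA.mul ∘ₗ
              TensorProduct.map (sbarHat k SA SB.Δ z x) (sbarHat k SA SB.Δ z x') ∘ₗ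
              (TensorProduct.tensorTensorTensorComm k B B B B).toLinearMap)
            (SB.Δ b ⊗ₜ[k] SB.Δ b')) ∧
      (∀ b : B,
        opT k SA SB.Δ z b (SA.mul x x')
          = (TensorProduct.lift SA.mul ∘ₗ
              TensorProduct.map (tHat k SA SB.Δ z x) (tHat k SA SB.Δ z x')) (SB.Δ b) ∧
        opTbar k SA SB.Δ z b (SA.mul x x')
          = (TensorProduct.lift SA.mul ∘ₗ
              TensorProduct.map (tbarHat k SA SB.Δ z x) (tbarHat k SA SB.Δ z x'))
            (SB.Δ b)) := by
  intro x hx x' hx'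
  let := SB.toCoalgebra
  have := SB.isCocomm
  have hB : IsCoalgHom SB (LinearMap.id : B →ₗ[k] B) := ⟨pair_id_id.symm, rfl⟩
  exact ⟨fun b b' =>
      ⟨LinearMap.congr_fun (P.lHat_mul hB hx hx') (b ⊗ₜ b'),
        LinearMap.congr_fun (P.rHat_mul hB hx hx') (b ⊗ₜ b'),
        LinearMap.congr_fun (P.sHat_mul hB hx hx') (b ⊗ₜ b'),
        LinearMap.congr_fun (P.sbarHat_mul hB hx hx') (b ⊗ₜ b')⟩,
    fun b =>
      ⟨LinearMap.congr_fun (P.tHat_mul hB hx hx') b,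
        LinearMap.congr_fun (P.tbarHat_mul hB hx hx') b⟩⟩

open FormalLoops in
/-- for `φ ∈ {l, r, s, s̄}`,
`φ(b,b')(x·x') = Σ φ(b₍₁₎,b'₍₁₎)x · φ(b₍₂₎,b'₍₂₎)x'`, and
`t(b)(x·x') = Σ t(b₍₁₎)x · t(b₍₂₎)x'`, `t̄(b)(x·x') = Σ t̄(b₍₁₎)x · t̄(b₍₂₎)x'`
for all `x, x' ∈ F(A)` and `b, b' ∈ B`. -/
theorem ops_multiplicative_on_Fsub
    (k : Type*) [Field k] [CharZero k]
    {A B : Type*} [AddCommGroup A] [Module k A] [AddCommGroup B] [Module k B]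
    (SA : DivBialg k A) (SB : DivBialg k B)
    (π : A →ₗ[k] B) (z : B →ₗ[k] A)
    (hπ : DivBialgHom k SA SB π) (hz : DivBialgHom k SB SA z)
    (hsec : π ∘ₗ z = LinearMap.id)
    (P : BoxPlusData k SA SB π z)
    (F : Submodule k A) (hF : F = Fsub k SA SB.one π) :
    ∀ x ∈ F, ∀ x' ∈ F,
      (∀ b b' : B,
        opL k SA SB.Δ z b b' (SA.mul x x')
          = (TensorProduct.lift SA.mul ∘ₗ
              TensorProduct.map (lHat k SA SB.Δ z x) (lHat k SA SB.Δ z x') ∘ₗ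
              (TensorProduct.tensorTensorTensorComm k B B B B).toLinearMap)
            (SB.Δ b ⊗ₜ[k] SB.Δ b') ∧
        opR k SA SB.Δ z b b' (SA.mul x x')
          = (TensorProduct.lift SA.mul ∘ₗ
              TensorProduct.map (rHat k SA SB.Δ z x) (rHat k SA SB.Δ z x') ∘ₗ
              (TensorProduct.tensorTensorTensorComm k B B B B).toLinearMap)
            (SB.Δ b ⊗ₜ[k] SB.Δ b') ∧
        opS k SA SB.Δ z b b' (SA.mul x x')
          = (TensorProduct.lift SA.mul ∘ₗ
              TensorProduct.map (sHat k SA SB.Δ z x) (sHat k SA SB.Δ z x') ∘ₗ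
              (TensorProduct.tensorTensorTensorComm k B B B B).toLinearMap)
            (SB.Δ b ⊗ₜ[k] SB.Δ b') ∧
        opSbar k SA SB.Δ z b b' (SA.mul x x')
          = (TensorProduct.lift SA.mul ∘ₗ
              TensorProduct.map (sbarHat k SA SB.Δ z x) (sbarHat k SA SB.Δ z x') ∘ₗ
              (TensorProduct.tensorTensorTensorComm k B B B B).toLinearMap)
            (SB.Δ b ⊗ₜ[k] SB.Δ b')) ∧
      (∀ b : B,
        opT k SA SB.Δ z b (SA.mul x x')
          = (TensorProduct.lift SA.mul ∘ₗ
              TensorProduct.map (tHat k SA SB.Δ z x) (tHat k SA SB.Δ z x')) (SB.Δ b) ∧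
        opTbar k SA SB.Δ z b (SA.mul x x')
          = (TensorProduct.lift SA.mul ∘ₗ
              TensorProduct.map (tbarHat k SA SB.Δ z x) (tbarHat k SA SB.Δ z x'))
            (SB.Δ b)) := by
  subst hF
  exact ops_multiplicative_on_Fsub_general (P.toUnitalMagmaOver hπ hz hsec)
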